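/- Let d ≥ 2 be an integer and γ ∈ (1/2, (d+3)/6), and set b* = (d+3)/2 − 3γ (so b* > 0) and C̄_{d,γ} = (2/√π)·Γ(2γ−1)Γ((d+1)/2 − γ)² / (Γ((d−1)/2)·Γ((d+2−4γ)/2)·Γ((2γ−1)/2)²). Then for every ξ ∈ ℝ^d \ {0} and every real b > 0, ∫_{ℝ^d} (|η|/|ξ|)^b H(η|ξ) dη ≥ ∫_{ℝ^d} (|η|/|ξ|)^{b*} H(η|ξ) dη, and moreover ∫_{ℝ^d} (|η|/|ξ|)^{b*} H(η|ξ) dη = C̄_{d,γ} ∫_0^π ∫_0^{π−φ₁} (sin φ₂ · sin(φ₁+φ₂))^{(d−1)/2 − γ} · sin^{2γ−2}(φ₁) dφ₂ dφ₁. -/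

import Mathlib

open MeasureTheory Set

/-- The constant `c_{d,γ}` of the standard majorizing kernel. -/
noncomputable def cdg (d : ℕ) (γ : ℝ) : ℝ :=
  Real.pi ^ (-(d : ℝ)/2) * Real.Gamma (2*γ - 1) * (Real.Gamma (((d : ℝ) + 1 - 2*γ)/2))^2 /
    (Real.Gamma (((d : ℝ) + 2 - 4*γ)/2) * (Real.Gamma ((2*γ - 1)/2))^2)

/-- `H(η|ξ) = c_{d,γ} |η|^{2γ−d−1} |ξ−η|^{2γ−d−1} |ξ|^{d+2−4γ}`. -/
noncomputable def Hker (d : ℕ) (γ : ℝ) (η ξ : EuclideanSpace ℝ (Fin d)) : ℝ :=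
  cdg d γ * ‖η‖ ^ (2*γ - (d : ℝ) - 1) * ‖ξ - η‖ ^ (2*γ - (d : ℝ) - 1)
    * ‖ξ‖ ^ ((d : ℝ) + 2 - 4*γ)

/-- The constant `C̄_{d,γ}`. -/
noncomputable def Cbar (d : ℕ) (γ : ℝ) : ℝ :=
  2 / Real.sqrt Real.pi * Real.Gamma (2*γ - 1) * (Real.Gamma (((d : ℝ) + 1)/2 - γ))^2 /
    (Real.Gamma (((d : ℝ) - 1)/2) * Real.Gamma (((d : ℝ) + 2 - 4*γ)/2)
      * (Real.Gamma ((2*γ - 1)/2))^2)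



lemma lint_fun_norm {E : Type*} [NormedAddCommGroup E] [NormedSpace ℝ E] [MeasurableSpace E]
    [Nontrivial E] (μ : Measure E) [FiniteDimensional ℝ E] [BorelSpace E] [μ.IsAddHaarMeasure]
    (f : ℝ → ENNReal) (hf : Measurable f) :
    ∫⁻ x, f (‖x‖) ∂μ = ((Module.finrank ℝ E : ENNReal) * μ (Metric.ball 0 1)) *
      ∫⁻ y in Ioi (0 : ℝ), ENNReal.ofReal (y ^ (Module.finrank ℝ E - 1)) * f y :=
  calc
    ∫⁻ x, f (‖x‖) ∂μ = ∫⁻ x : ({(0)}ᶜ : Set E), f (‖x.1‖) ∂(μ.comap (↑)) := by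
      rw [lintegral_subtype_comap (measurableSet_singleton _).compl fun x ↦ f (‖x‖),
        restrict_compl_singleton]
    _ = ∫⁻ x, f x.2 ∂μ.toSphere.prod (.volumeIoiPow (Module.finrank ℝ E - 1)) := by
      simpa using μ.measurePreserving_homeomorphUnitSphereProd.lintegral_comp_emb
        (Homeomorph.measurableEmbedding _) (f ∘ Subtype.val ∘ Prod.snd)
    _ = μ.toSphere univ * ∫⁻ x : Ioi (0 : ℝ), f x ∂.volumeIoiPow (Module.finrank ℝ E - 1) := by
      rw [lintegral_prod _ (by fun_prop)]
      simp [mul_comm]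
    _ = _ := by
      simp only [Measure.volumeIoiPow]
      rw [lintegral_withDensity_eq_lintegral_mul _ (by fun_prop) (by fun_prop), μ.toSphere_apply_univ,
        ← lintegral_subtype_comap measurableSet_Ioi]
      rfl

lemma vol_const (n : ℕ) (hn : 1 ≤ n) :
    ((Module.finrank ℝ (EuclideanSpace ℝ (Fin n)) : ENNReal) *
      (volume : Measure (EuclideanSpace ℝ (Fin n))) (Metric.ball 0 1)) =
    ENNReal.ofReal (2 * Real.pi ^ ((n:ℝ)/2) / Real.Gamma ((n:ℝ)/2)) := by
  have : Nonempty (Fin n) := ⟨⟨0, hn⟩⟩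
  have hn' : (0:ℝ) < n := by exact_mod_cast hn
  rw [EuclideanSpace.volume_ball]
  simp only [finrank_euclideanSpace, Fintype.card_fin, ENNReal.ofReal_one, one_pow, one_mul]
  rw [← ENNReal.ofReal_natCast, ← ENNReal.ofReal_mul hn'.le]
  congr 1
  rw [Real.Gamma_add_one (by positivity), Real.sqrt_eq_rpow, ← Real.rpow_natCast, ← Real.rpow_mul Real.pi_pos.le]
  have := (Real.Gamma_pos_of_pos (show 0 < (n:ℝ)/2 by positivity)).ne'
  field_simp

lemma reduceA (n : ℕ) (hn : 1 ≤ n) (ξ : EuclideanSpace ℝ (Fin (n+1))) (hξ : ξ ≠ 0)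
    (F : ℝ → ℝ → ENNReal) (hF : Measurable (fun p : ℝ × ℝ => F p.1 p.2)) :
    ∫⁻ η : EuclideanSpace ℝ (Fin (n+1)), F ‖η‖ ‖ξ - η‖ =
      ENNReal.ofReal (2 * Real.pi ^ ((n:ℝ)/2) / Real.Gamma ((n:ℝ)/2)) *
      ∫⁻ x : ℝ, ∫⁻ y in Ioi (0:ℝ), ENNReal.ofReal (y ^ (n-1)) *
        F (√(x^2+y^2)) (√((‖ξ‖ - x)^2 + y^2)) := by
  have : Nonempty (Fin n) := ⟨⟨0, hn⟩⟩
  have hr : ‖ξ‖ ≠ 0 := by simpa using hξ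
  obtain ⟨b, hb⟩ := Orthonormal.exists_orthonormalBasis_extension_of_card_eq (𝕜 := ℝ)
    (E := EuclideanSpace ℝ (Fin (n+1))) (ι := Fin (n+1)) (by simp)
    (v := fun _ => (‖ξ‖⁻¹ : ℝ) • ξ) (s := {0}) (by
      constructor
      · intro i; simp [norm_smul, hr]
      · intro i j hij; exact absurd (Subsingleton.elim i j) hij)
  have hb0 : b 0 = (‖ξ‖⁻¹ : ℝ) • ξ := hb 0 rfl
  have hξb : b.repr ξ = EuclideanSpace.single 0 ‖ξ‖ := by
    have : ξ = ‖ξ‖ • b 0 := by rw [hb0, smul_smul, mul_inv_cancel₀ hr, one_smul]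
    conv_lhs => rw [this]
    rw [map_smul, b.repr_self]
    ext i; simp
  have h1 : ∫⁻ η : EuclideanSpace ℝ (Fin (n+1)), F ‖η‖ ‖ξ - η‖ =
      ∫⁻ η : EuclideanSpace ℝ (Fin (n+1)), F ‖η‖ ‖EuclideanSpace.single 0 ‖ξ‖ - η‖ := by
    rw [← b.measurePreserving_repr.lintegral_comp (f := fun η => F ‖η‖ ‖EuclideanSpace.single 0 ‖ξ‖ - η‖) (by fun_prop)]
    refine lintegral_congr fun η => ?_
    have e : ‖EuclideanSpace.single 0 ‖ξ‖ - b.repr η‖ = ‖ξ - η‖ := by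
      rw [← hξb, ← map_sub, LinearIsometryEquiv.norm_map]
    rw [e, LinearIsometryEquiv.norm_map]
  rw [h1, ← (PiLp.volume_preserving_toLp (Fin (n+1))).lintegral_comp (by fun_prop),
    ← (volume_preserving_piFinSuccAbove (fun _ : Fin (n+1) => ℝ) 0).symm.lintegral_comp (by fun_prop),
    Measure.volume_eq_prod, lintegral_prod _ (by fun_prop), ← lintegral_const_mul']
  rotate_left
  · exact ENNReal.ofReal_ne_top
  refine lintegral_congr fun x => ?_
  rw [← vol_const n hn]
  have := lint_fun_norm (volume : Measure (EuclideanSpace ℝ (Fin n)))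
    (fun y => F (√(x^2+y^2)) (√((‖ξ‖ - x)^2 + y^2))) (by fun_prop)
  rw [finrank_euclideanSpace, Fintype.card_fin] at this ⊢
  rw [← this, ← (PiLp.volume_preserving_toLp (Fin n)).lintegral_comp (by fun_prop)]
  refine lintegral_congr fun v => ?_
  congr 1
  · simp [EuclideanSpace.norm_eq, Fin.sum_univ_succ, MeasurableEquiv.piFinSuccAbove, Real.sq_sqrt, Finset.sum_nonneg, sq_nonneg]
  · simp [EuclideanSpace.norm_eq, Fin.sum_univ_succ, MeasurableEquiv.piFinSuccAbove, Real.sq_sqrt, Finset.sum_nonneg, sq_nonneg]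

lemma polarB (f : ℝ × ℝ → ENNReal) (hf : Measurable f) :
    ∫⁻ x : ℝ, ∫⁻ y in Ioi (0:ℝ), f (x, y) =
    ∫⁻ α in Ioo 0 Real.pi, ∫⁻ ρ in Ioi (0:ℝ), ENNReal.ofReal ρ * f (ρ * Real.cos α, ρ * Real.sin α) := by
  set g : ℝ × ℝ → ENNReal := {p : ℝ × ℝ | 0 < p.2}.indicator f with hg
  have hS : MeasurableSet {p : ℝ × ℝ | 0 < p.2} := measurableSet_lt measurable_const measurable_snd
  have hgm : Measurable g := hf.indicator hS
  have h1 : ∫⁻ x : ℝ, ∫⁻ y in Ioi (0:ℝ), f (x, y) = ∫⁻ p : ℝ × ℝ, g p := by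
    rw [Measure.volume_eq_prod, lintegral_prod _ hgm.aemeasurable]
    refine lintegral_congr fun x => ?_
    rw [← lintegral_indicator measurableSet_Ioi]
    rfl
  rw [h1, ← lintegral_comp_polarCoord_symm, polarCoord_target, Measure.volume_eq_prod,
    ← Measure.prod_restrict, lintegral_prod_symm]
  · have hsub : Ioo 0 Real.pi ⊆ Ioo (-Real.pi) Real.pi :=
      Ioo_subset_Ioo_left (by linarith [Real.pi_pos])
    rw [← lintegral_indicator measurableSet_Ioo, ← lintegral_indicator measurableSet_Ioo]
    refine lintegral_congr fun α => ?_
    by_cases hα : α ∈ Ioo 0 Real.pi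
    · rw [indicator_of_mem (hsub hα), indicator_of_mem hα]
      refine setLIntegral_congr_fun measurableSet_Ioi fun ρ hρ => ?_
      have : (0:ℝ) < ρ * Real.sin α := mul_pos hρ (Real.sin_pos_of_mem_Ioo hα)
      simp [hg, polarCoord, this]
    · rw [indicator_of_notMem hα]
      by_cases hα' : α ∈ Ioo (-Real.pi) Real.pi
      · rw [indicator_of_mem hα']
        have : ∀ ρ ∈ Ioi (0:ℝ), ENNReal.ofReal ρ • g (polarCoord.symm (ρ, α)) = 0 := by
          intro ρ hρ
          have h0 : α ≤ 0 := by
            by_contra h; exact hα ⟨not_le.1 h, hα'.2⟩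
          have : ρ * Real.sin α ≤ 0 := mul_nonpos_of_nonneg_of_nonpos (le_of_lt hρ)
            (Real.sin_nonpos_of_nonpos_of_neg_pi_le h0 hα'.1.le)
          simp [hg, polarCoord, this]
        rw [setLIntegral_congr_fun measurableSet_Ioi this]
        simp
      · rw [indicator_of_notMem hα']
  · have : Measurable fun p : ℝ × ℝ => ENNReal.ofReal p.1 • g (p.1 * Real.cos p.2, p.1 * Real.sin p.2) := by
      simp only [smul_eq_mul]; fun_prop
    exact this.aemeasurable

lemma subC (r α : ℝ) (hr : 0 < r) (hα : α ∈ Ioo 0 Real.pi) (g : ℝ → ENNReal) :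
    ∫⁻ ρ in Ioi (0:ℝ), g ρ =
    ∫⁻ β in Ioo 0 (Real.pi - α), ENNReal.ofReal (r * Real.sin α / Real.sin (α + β) ^ 2) *
      g (r * Real.sin β / Real.sin (α + β)) := by
  have hsα := Real.sin_pos_of_mem_Ioo hα
  have hs : ∀ β ∈ Ioo 0 (Real.pi - α), 0 < Real.sin (α + β) := fun β hβ =>
    Real.sin_pos_of_mem_Ioo ⟨by linarith [hα.1, hβ.1], by linarith [hβ.2]⟩
  have hsb : ∀ β ∈ Ioo 0 (Real.pi - α), 0 < Real.sin β := fun β hβ =>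
    Real.sin_pos_of_mem_Ioo ⟨by linarith [hα.1, hβ.1], by linarith [hβ.2, hα.1]⟩
  have hder : ∀ β ∈ Ioo 0 (Real.pi - α), HasDerivAt (fun β => r * Real.sin β / Real.sin (α + β))
      (r * Real.sin α / Real.sin (α + β) ^ 2) β := by
    intro β hβ
    have h1 := ((Real.hasDerivAt_sin β).const_mul r).div
      (((hasDerivAt_id β).const_add α).sin) (hs β hβ).ne'
    refine h1.congr_deriv ?_
    have : Real.sin α = Real.sin (α + β) * Real.cos β - Real.cos (α + β) * Real.sin β := by
      rw [← Real.sin_sub]; congr 1; ring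
    rw [this]
    simp only [id]
    congr 1; ring
  have hinj : StrictMonoOn (fun β => r * Real.sin β / Real.sin (α + β)) (Ioo 0 (Real.pi - α)) := by
    apply strictMonoOn_of_deriv_pos (convex_Ioo _ _)
    · intro β hβ; exact (hder β hβ).continuousAt.continuousWithinAt
    · intro β hβ
      rw [interior_Ioo] at hβ
      rw [(hder β hβ).deriv]
      have := hs β hβ
      positivity
  have him : (fun β => r * Real.sin β / Real.sin (α + β)) '' (Ioo 0 (Real.pi - α)) = Ioi 0 := by
    ext ρ
    constructor
    · rintro ⟨β, hβ, rfl⟩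
      have := hs β hβ
      have := hsb β hβ
      simp only [mem_Ioi]; positivity
    · intro hρ
      have hρ : 0 < ρ := hρ
      -- the equation r sin β = ρ sin (α+β), by the intermediate value theorem
      have hc : ContinuousOn (fun β => r * Real.sin β - ρ * Real.sin (α + β)) (Icc 0 (Real.pi - α)) := by
        fun_prop
      have := intermediate_value_Ioo (by linarith [hα.2] : (0:ℝ) ≤ Real.pi - α) hc
      have h0 : (0:ℝ) ∈ Ioo (r * Real.sin 0 - ρ * Real.sin (α + 0))
          (r * Real.sin (Real.pi - α) - ρ * Real.sin (α + (Real.pi - α))) := by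
        have : α + (Real.pi - α) = Real.pi := by ring
        rw [this, Real.sin_pi_sub]
        simp only [Real.sin_zero, Real.sin_pi, add_zero, mul_zero, sub_zero, zero_sub, mem_Ioo]
        constructor
        · nlinarith [mul_pos hρ hsα]
        · positivity
      obtain ⟨β, hβ, h⟩ := this h0
      refine ⟨β, hβ, ?_⟩
      have := (hs β hβ).ne'
      simp only at h ⊢
      field_simp
      linarith
  rw [← him, lintegral_image_eq_lintegral_abs_deriv_mul measurableSet_Ioo
    (fun β hβ => (hder β hβ).hasDerivWithinAt) hinj.injOn]
  refine setLIntegral_congr_fun measurableSet_Ioo fun β hβ => ?_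
  have := hs β hβ
  rw [abs_of_nonneg (by positivity)]

lemma algD (m : ℕ) (γ b c r S T A : ℝ) (hr : 0 < r) (hS : 0 < S) (hT : 0 < T) (hA : 0 < A) :
    (r * A / T^2) * ((r * S / T) * ((r * S / T * A)^m * ((r * S / T / r) ^ b *
      (c * (r * S / T) ^ (2*γ - ((m+2 : ℕ) : ℝ) - 1) * (r * A / T) ^ (2*γ - ((m+2 : ℕ) : ℝ) - 1)
        * r ^ (((m+2 : ℕ) : ℝ) + 2 - 4*γ))))) =
    c * (S ^ (b + 2*γ - 2) * T ^ (((m+2 : ℕ) : ℝ) + 1 - 4*γ - b) * A ^ (2*γ - 2)) := by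
  obtain ⟨r, rfl⟩ : ∃ x, r = Real.exp x := ⟨_, (Real.exp_log hr).symm⟩
  obtain ⟨S, rfl⟩ : ∃ x, S = Real.exp x := ⟨_, (Real.exp_log hS).symm⟩
  obtain ⟨T, rfl⟩ : ∃ x, T = Real.exp x := ⟨_, (Real.exp_log hT).symm⟩
  obtain ⟨A, rfl⟩ : ∃ x, A = Real.exp x := ⟨_, (Real.exp_log hA).symm⟩
  rw [← Real.rpow_natCast _ m, ← Real.rpow_natCast _ 2]
  simp only [← Real.exp_add, ← Real.exp_sub, ← Real.exp_mul]
  rw [show ∀ a1 a2 a3 a4 a5 a6 a7 : ℝ, a1 * (a2 * (a3 * (a4 * (c * a5 * a6 * a7)))) =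
    c * (a1 * a2 * a3 * a4 * a5 * a6 * a7) by intros; ring]
  simp only [← Real.exp_add]
  congr 2
  push_cast
  ring

lemma sinInt (s : ℝ) (hs : -1 < s) :
    ∫⁻ x in Ioo 0 Real.pi, ENNReal.ofReal (Real.sin x ^ s) < ⊤ := by
  have hpi := Real.pi_pos
  have i1 : IntervalIntegrable (fun x : ℝ => x ^ s) volume 0 Real.pi :=
    intervalIntegral.intervalIntegrable_rpow' hs
  have i2 : IntervalIntegrable (fun x : ℝ => (Real.pi - x) ^ s) volume 0 Real.pi := by
    have := i1.comp_sub_left Real.pi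
    simpa using this.symm
  have i3 := ((i1.const_mul ((2/Real.pi)^s)).add (i2.const_mul ((2/Real.pi)^s))).add
    (intervalIntegrable_const (c := (1:ℝ)))
  rw [intervalIntegrable_iff_integrableOn_Ioo_of_le hpi.le] at i3
  refine lt_of_le_of_lt (setLIntegral_mono' measurableSet_Ioo fun x hx => ?_)
    i3.lintegral_lt_top
  apply ENNReal.ofReal_le_ofReal
  have hsx := Real.sin_pos_of_mem_Ioo hx
  have p1 : 0 ≤ (2/Real.pi)^s * x^s := by have := hx.1; positivity
  have p2 : 0 ≤ (2/Real.pi)^s * (Real.pi - x)^s := by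
    have := sub_pos.2 hx.2; positivity
  rcases le_or_gt 0 s with h | h
  · have := Real.rpow_le_one hsx.le (Real.sin_le_one x) h
    linarith
  · rcases le_total x (Real.pi/2) with h2 | h2
    · have h3 := Real.mul_le_sin hx.1.le h2
      have h4 := Real.rpow_le_rpow_of_nonpos (by have := hx.1; positivity) h3 h.le
      rw [Real.mul_rpow (by positivity) hx.1.le] at h4
      linarith
    · have h3 := Real.mul_le_sin (x := Real.pi - x) (by linarith [hx.2]) (by linarith)
      rw [Real.sin_pi_sub] at h3
      have h4 := Real.rpow_le_rpow_of_nonpos (by have := sub_pos.2 hx.2; positivity) h3 h.le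
      rw [Real.mul_rpow (by positivity) (by linarith [hx.2])] at h4
      linarith

lemma amgm (S T u v : ℝ) (hS : 0 < S) (hT : 0 < T) :
    2 * (S ^ ((u+v)/2) * T ^ ((u+v)/2)) ≤ S^u * T^v + S^v * T^u := by
  obtain ⟨S, rfl⟩ : ∃ x, S = Real.exp x := ⟨_, (Real.exp_log hS).symm⟩
  obtain ⟨T, rfl⟩ : ∃ x, T = Real.exp x := ⟨_, (Real.exp_log hT).symm⟩
  simp only [← Real.exp_add, ← Real.exp_mul]
  have h := sq_nonneg (Real.exp ((S * u + T * v)/2) - Real.exp ((S * v + T * u)/2))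
  have e1 : Real.exp (S * u + T * v) = Real.exp ((S * u + T * v)/2) ^ 2 := by
    rw [← Real.exp_nat_mul]; congr 1; push_cast; ring
  have e2 : Real.exp (S * v + T * u) = Real.exp ((S * v + T * u)/2) ^ 2 := by
    rw [← Real.exp_nat_mul]; congr 1; push_cast; ring
  have e3 : Real.exp (S * ((u+v)/2) + T * ((u+v)/2)) =
      Real.exp ((S * u + T * v)/2) * Real.exp ((S * v + T * u)/2) := by
    rw [← Real.exp_add]; congr 1; ring
  rw [e1, e2, e3]; linarith

/-- The inner angular integral. -/
noncomputable def innerJ (α u v : ℝ) : ENNReal :=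
  ∫⁻ β in Ioo 0 (Real.pi - α), ENNReal.ofReal (Real.sin β ^ u * Real.sin (α + β) ^ v)

lemma innerJ_symm (α u v : ℝ) : innerJ α u v = innerJ α v u := by
  unfold innerJ
  rw [← lintegral_indicator measurableSet_Ioo, ← lintegral_indicator measurableSet_Ioo,
    ← lintegral_sub_left_eq_self _ (Real.pi - α)]
  refine lintegral_congr fun β => ?_
  by_cases h : β ∈ Ioo 0 (Real.pi - α)
  · have h' : Real.pi - α - β ∈ Ioo 0 (Real.pi - α) := ⟨by linarith [h.2], by linarith [h.1]⟩
    rw [indicator_of_mem h, indicator_of_mem h']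
    rw [show α + (Real.pi - α - β) = Real.pi - β by ring, Real.sin_pi_sub,
      show Real.pi - α - β = Real.pi - (α + β) by ring, Real.sin_pi_sub, mul_comm]
  · have h' : Real.pi - α - β ∉ Ioo 0 (Real.pi - α) :=
      fun h' => h ⟨by linarith [h'.2], by linarith [h'.1]⟩
    rw [indicator_of_notMem h, indicator_of_notMem h']

lemma innerJ_le (α u v : ℝ) (hα : α ∈ Ioo 0 Real.pi) :
    innerJ α ((u+v)/2) ((u+v)/2) ≤ innerJ α u v := by
  have h : 2 * innerJ α ((u+v)/2) ((u+v)/2) ≤ 2 * innerJ α u v := by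
    have : 2 * innerJ α u v = innerJ α u v + innerJ α v u := by rw [innerJ_symm α v u, two_mul]
    rw [this]
    unfold innerJ
    rw [← lintegral_add_left (by fun_prop), ← lintegral_const_mul' _ _ (by simp)]
    refine setLIntegral_mono' measurableSet_Ioo fun β hβ => ?_
    have hS : 0 < Real.sin β :=
      Real.sin_pos_of_mem_Ioo ⟨by linarith [hα.1, hβ.1], by linarith [hβ.2, hα.1]⟩
    have hT : 0 < Real.sin (α + β) :=
      Real.sin_pos_of_mem_Ioo ⟨by linarith [hα.1, hβ.1], by linarith [hβ.2]⟩
    rw [← ENNReal.ofReal_add (by positivity) (by positivity),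
      show (2:ENNReal) = ENNReal.ofReal 2 by simp, ← ENNReal.ofReal_mul (by norm_num)]
    exact ENNReal.ofReal_le_ofReal (amgm _ _ _ _ hS hT)
  exact (ENNReal.mul_le_mul_iff_right (by simp) (by simp)).1 h

lemma innerJ_bound (α a : ℝ) (hα : α ∈ Ioo 0 Real.pi) :
    innerJ α a a ≤ ∫⁻ x in Ioo 0 Real.pi, ENNReal.ofReal (Real.sin x ^ (2*a)) := by
  calc innerJ α a a = innerJ α ((2*a+0)/2) ((2*a+0)/2) := by congr 1 <;> ring
    _ ≤ innerJ α (2*a) 0 := innerJ_le α _ _ hα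
    _ = ∫⁻ x in Ioo 0 (Real.pi - α), ENNReal.ofReal (Real.sin x ^ (2*a)) := by simp [innerJ]
    _ ≤ _ := lintegral_mono_set (Ioo_subset_Ioo_right (by linarith [hα.1]))

lemma momentFormula (m : ℕ) (γ b : ℝ) (hc : 0 ≤ cdg (m+2) γ)
    (ξ : EuclideanSpace ℝ (Fin (m+2))) (hξ : ξ ≠ 0) :
    ∫⁻ η, ENNReal.ofReal ((‖η‖ / ‖ξ‖) ^ b * Hker (m+2) γ η ξ) =
      ENNReal.ofReal (Cbar (m+2) γ) *
      ∫⁻ α in Ioo 0 Real.pi, ENNReal.ofReal (Real.sin α ^ (2*γ - 2)) *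
        innerJ α (b + 2*γ - 2) (((m+2 : ℕ) : ℝ) + 1 - 4*γ - b) := by
  have hr : 0 < ‖ξ‖ := norm_pos_iff.2 hξ
  have hA := reduceA (m+1) (by omega) ξ hξ (fun u v => ENNReal.ofReal ((u / ‖ξ‖) ^ b *
    (cdg (m+2) γ * u ^ (2*γ - ((m+2 : ℕ) : ℝ) - 1) * v ^ (2*γ - ((m+2 : ℕ) : ℝ) - 1)
      * ‖ξ‖ ^ (((m+2 : ℕ) : ℝ) + 2 - 4*γ)))) (by fun_prop)
  unfold Hker
  refine hA.trans ?_
  have hB := polarB (fun p => ENNReal.ofReal (p.2 ^ (m+1-1)) *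
    ENNReal.ofReal ((√(p.1^2+p.2^2) / ‖ξ‖) ^ b *
    (cdg (m+2) γ * √(p.1^2+p.2^2) ^ (2*γ - ((m+2 : ℕ) : ℝ) - 1) *
      √((‖ξ‖ - p.1)^2+p.2^2) ^ (2*γ - ((m+2 : ℕ) : ℝ) - 1)
      * ‖ξ‖ ^ (((m+2 : ℕ) : ℝ) + 2 - 4*γ)))) (by fun_prop)
  simp only at hB
  rw [hB]
  have hC : Cbar (m+2) γ = (2 * Real.pi ^ (((m+1 : ℕ) : ℝ)/2) / Real.Gamma (((m+1 : ℕ) : ℝ)/2)) *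
      cdg (m+2) γ := by
    unfold Cbar cdg
    have e1 : ((m+2 : ℕ) : ℝ) - 1 = ((m+1 : ℕ) : ℝ) := by push_cast; ring
    have e2 : (((m+2 : ℕ) : ℝ) + 1)/2 - γ = (((m+2 : ℕ) : ℝ) + 1 - 2*γ)/2 := by ring
    have e3 : Real.pi ^ (-(((m+2 : ℕ)) : ℝ)/2) =
        (√Real.pi)⁻¹ * (Real.pi ^ (((m+1 : ℕ) : ℝ)/2))⁻¹ := by
      rw [Real.sqrt_eq_rpow, ← Real.rpow_neg Real.pi_pos.le, ← Real.rpow_neg Real.pi_pos.le,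
        ← Real.rpow_add Real.pi_pos]
      congr 1; push_cast; ring
    rw [e1, e2, e3]
    have : Real.pi ^ (((m+1 : ℕ) : ℝ)/2) ≠ 0 := (Real.rpow_pos_of_pos Real.pi_pos _).ne'
    field_simp
  have hK : 0 ≤ 2 * Real.pi ^ (((m+1 : ℕ) : ℝ)/2) / Real.Gamma (((m+1 : ℕ) : ℝ)/2) := by
    have := Real.Gamma_pos_of_pos (show 0 < (((m+1 : ℕ) : ℝ)/2) by positivity)
    have := Real.pi_pos
    positivity
  rw [hC, ENNReal.ofReal_mul hK, mul_assoc]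
  congr 1
  rw [← lintegral_const_mul' _ _ ENNReal.ofReal_ne_top]
  refine setLIntegral_congr_fun measurableSet_Ioo fun α hα => ?_
  have hsα := Real.sin_pos_of_mem_Ioo hα
  rw [subC ‖ξ‖ α hr hα]
  unfold innerJ
  rw [← lintegral_const_mul' _ _ ENNReal.ofReal_ne_top,
    ← lintegral_const_mul' _ _ ENNReal.ofReal_ne_top]
  refine setLIntegral_congr_fun measurableSet_Ioo fun β hβ => ?_
  have hS : 0 < Real.sin β :=
    Real.sin_pos_of_mem_Ioo ⟨by linarith [hα.1, hβ.1], by linarith [hβ.2, hα.1]⟩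
  have hT : 0 < Real.sin (α + β) :=
    Real.sin_pos_of_mem_Ioo ⟨by linarith [hα.1, hβ.1], by linarith [hβ.2]⟩
  have s1 : √((‖ξ‖ * Real.sin β / Real.sin (α + β) * Real.cos α)^2 +
      (‖ξ‖ * Real.sin β / Real.sin (α + β) * Real.sin α)^2) =
      ‖ξ‖ * Real.sin β / Real.sin (α + β) := by
    rw [Real.sqrt_eq_iff_mul_self_eq_of_pos (by positivity)]
    linear_combination (-(‖ξ‖ * Real.sin β / Real.sin (α + β))^2) * Real.sin_sq_add_cos_sq α
  have s2 : √((‖ξ‖ - ‖ξ‖ * Real.sin β / Real.sin (α + β) * Real.cos α)^2 +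
      (‖ξ‖ * Real.sin β / Real.sin (α + β) * Real.sin α)^2) =
      ‖ξ‖ * Real.sin α / Real.sin (α + β) := by
    rw [Real.sqrt_eq_iff_mul_self_eq_of_pos (by positivity)]
    have h1 : ‖ξ‖ - ‖ξ‖ * Real.sin β / Real.sin (α + β) * Real.cos α =
        ‖ξ‖ * Real.sin α / Real.sin (α + β) * Real.cos β := by
      field_simp
      rw [Real.sin_add]; ring
    rw [h1]
    linear_combination (-(‖ξ‖ * Real.sin α / Real.sin (α + β))^2) * Real.sin_sq_add_cos_sq β
  rw [s1, s2, ← ENNReal.ofReal_mul (by positivity), ← ENNReal.ofReal_mul (by positivity),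
    ← ENNReal.ofReal_mul (by positivity), ← ENNReal.ofReal_mul (by positivity),
    ← ENNReal.ofReal_mul hc, Nat.add_sub_cancel, algD m γ b _ _ _ _ _ hr hS hT hsα]
  congr 1
  ring

theorem stmt7 (d : ℕ) (hd : 2 ≤ d) (γ : ℝ)
    (hγ : γ ∈ Set.Ioo (1/2 : ℝ) (((d : ℝ) + 3)/6))
    (ξ : EuclideanSpace ℝ (Fin d)) (hξ : ξ ≠ 0) :
    (∀ b : ℝ, 0 < b →
      ∫⁻ η, ENNReal.ofReal ((‖η‖ / ‖ξ‖) ^ (((d : ℝ) + 3)/2 - 3*γ) * Hker d γ η ξ) ≤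
        ∫⁻ η, ENNReal.ofReal ((‖η‖ / ‖ξ‖) ^ b * Hker d γ η ξ)) ∧
    ∫⁻ η, ENNReal.ofReal ((‖η‖ / ‖ξ‖) ^ (((d : ℝ) + 3)/2 - 3*γ) * Hker d γ η ξ) =
      ENNReal.ofReal (Cbar d γ *
        ∫ φ₁ in Set.Ioo (0 : ℝ) Real.pi, ∫ φ₂ in Set.Ioo (0 : ℝ) (Real.pi - φ₁),
          (Real.sin φ₂ * Real.sin (φ₁ + φ₂)) ^ (((d : ℝ) - 1)/2 - γ)
            * (Real.sin φ₁) ^ (2*γ - 2)) := by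
  obtain ⟨m, rfl⟩ : ∃ m, d = m + 2 := ⟨d - 2, by omega⟩
  obtain ⟨h1, h2⟩ := hγ
  have hm : (0:ℝ) ≤ m := Nat.cast_nonneg m
  have hdc : ((m + 2 : ℕ) : ℝ) = m + 2 := by push_cast; ring
  have hG1 : 0 < Real.Gamma (2*γ - 1) := Real.Gamma_pos_of_pos (by linarith)
  have hG2 : 0 < Real.Gamma ((((m+2 : ℕ) : ℝ) + 2 - 4*γ)/2) :=
    Real.Gamma_pos_of_pos (by linarith)
  have hG3 : 0 < Real.Gamma ((((m+2 : ℕ) : ℝ) - 1)/2) :=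
    Real.Gamma_pos_of_pos (by rw [hdc]; linarith)
  have hpi := Real.pi_pos
  have hc : 0 ≤ cdg (m+2) γ := by unfold cdg; positivity
  have hCb : 0 ≤ Cbar (m+2) γ := by unfold Cbar; positivity
  set a : ℝ := (((m+2 : ℕ) : ℝ) - 1)/2 - γ with ha
  have hstar := momentFormula m γ ((((m+2 : ℕ) : ℝ) + 3)/2 - 3*γ) hc ξ hξ
  rw [show (((m+2 : ℕ) : ℝ) + 3)/2 - 3*γ + 2*γ - 2 = a by rw [ha]; ring,
    show ((m+2 : ℕ) : ℝ) + 1 - 4*γ - ((((m+2 : ℕ) : ℝ) + 3)/2 - 3*γ) = a by rw [ha]; ring] at hstar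
  rw [hstar]
  constructor
  · intro b _
    rw [momentFormula m γ b hc ξ hξ]
    refine mul_le_mul_right ?_ _
    refine setLIntegral_mono' measurableSet_Ioo fun α hα => ?_
    have := innerJ_le α (b + 2*γ - 2) (((m+2 : ℕ) : ℝ) + 1 - 4*γ - b) hα
    rw [show (b + 2*γ - 2 + (((m+2 : ℕ) : ℝ) + 1 - 4*γ - b))/2 = a by rw [ha]; ring] at this
    gcongr
  · have ha2 : -1 < 2 * a := by linarith
    have hfin : ∫⁻ α in Ioo 0 Real.pi, ENNReal.ofReal (Real.sin α ^ (2*γ - 2)) * innerJ α a a < ⊤ := by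
      refine lt_of_le_of_lt (setLIntegral_mono' measurableSet_Ioo fun α hα =>
        mul_le_mul_right (innerJ_bound α a hα) _) ?_
      rw [lintegral_mul_const _ (by fun_prop)]
      exact ENNReal.mul_lt_top (sinInt _ (by linarith)) (sinInt _ ha2)
    have hmeas : Measurable fun α => ENNReal.ofReal (Real.sin α ^ (2*γ - 2)) * innerJ α a a := by
      refine Measurable.mul (by fun_prop) ?_
      have : (fun α => innerJ α a a) = fun α => ∫⁻ β, {p : ℝ × ℝ | p.2 ∈ Ioo 0 (Real.pi - p.1)}.indicator
          (fun p => ENNReal.ofReal (Real.sin p.2 ^ a * Real.sin (p.1 + p.2) ^ a)) (α, β) := by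
        ext α
        unfold innerJ
        rw [← lintegral_indicator measurableSet_Ioo]
        rfl
      rw [this]
      refine Measurable.lintegral_prod_right' (f := {p : ℝ × ℝ | p.2 ∈ Ioo 0 (Real.pi - p.1)}.indicator
          (fun p => ENNReal.ofReal (Real.sin p.2 ^ a * Real.sin (p.1 + p.2) ^ a))) ?_
      refine Measurable.indicator (by fun_prop) ?_
      exact (measurableSet_lt measurable_const measurable_snd).inter
        (measurableSet_lt measurable_snd (measurable_const.sub measurable_fst))
    have hint : ∫ φ₁ in Set.Ioo (0 : ℝ) Real.pi, ∫ φ₂ in Set.Ioo (0 : ℝ) (Real.pi - φ₁),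
          (Real.sin φ₂ * Real.sin (φ₁ + φ₂)) ^ a * (Real.sin φ₁) ^ (2*γ - 2) =
        (∫⁻ α in Ioo 0 Real.pi, ENNReal.ofReal (Real.sin α ^ (2*γ - 2)) * innerJ α a a).toReal := by
      rw [← integral_toReal hmeas.aemeasurable (ae_lt_top hmeas hfin.ne)]
      refine setIntegral_congr_fun measurableSet_Ioo fun α hα => ?_
      have hsα := Real.sin_pos_of_mem_Ioo hα
      have hpos : ∀ β ∈ Ioo 0 (Real.pi - α), 0 < Real.sin β ∧ 0 < Real.sin (α + β) := fun β hβ =>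
        ⟨Real.sin_pos_of_mem_Ioo ⟨by linarith [hα.1, hβ.1], by linarith [hβ.2, hα.1]⟩,
        Real.sin_pos_of_mem_Ioo ⟨by linarith [hα.1, hβ.1], by linarith [hβ.2]⟩⟩
      rw [integral_eq_lintegral_of_nonneg_ae]
      · congr 1
        unfold innerJ
        rw [← lintegral_const_mul' _ _ ENNReal.ofReal_ne_top]
        refine setLIntegral_congr_fun measurableSet_Ioo fun β hβ => ?_
        obtain ⟨hS, hT⟩ := hpos β hβ
        rw [← ENNReal.ofReal_mul (by positivity), Real.mul_rpow hS.le hT.le, mul_comm]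
      · refine (ae_restrict_iff' measurableSet_Ioo).2 (Filter.Eventually.of_forall fun β hβ => ?_)
        obtain ⟨hS, hT⟩ := hpos β hβ
        simp only [Pi.zero_apply]
        positivity
      · exact Measurable.aestronglyMeasurable (by fun_prop)
    rw [hint, ENNReal.ofReal_mul hCb, ENNReal.ofReal_toReal hfin.ne]
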